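/- Let d ≥ 1, δ > 1, 0 < γ < 1, β > 0 and c > 0. The Poisson integral ∫_{m^{-1/γ}}^{s} du ∫_{|x|^d < m} dx ρ(β^{-1} u^γ |x|^d), with s = m^{-(δ-1)/(γδ)} and ρ(t) = min(1, t^{-δ}), satisfies: as m → ∞ it is asymptotically bounded below by (β ω_d δ/(2(1-γ)(δ-1))) · s^{1-γ}; in particular for all sufficiently large m the integral is at least (β ω_d δ/(2(1-γ)(δ-1))) · m^{-(1-γ)(δ-1)/(γδ)}. -/

import Mathlib

open MeasureTheory Filter

/-- Volume of the d-dimensional Euclidean unit ball. -/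
noncomputable def unitBallVol (d : ℕ) : ℝ :=
  (volume (Metric.ball (0 : EuclideanSpace ℝ (Fin d)) 1)).toReal

/-!
In the coordinate `t = ‖x‖ ^ d` the measure `dx` becomes `ω_d dt`, so after rescaling by
`c = β⁻¹ u ^ γ` the inner integral is `ω_d β u ^ (-γ) Φ (β⁻¹ m u ^ γ)`, where `Φ M = ∫₀^M ρ`.
Put `u = s v` in the outer integral: dividing by `s ^ (1 - γ)` leaves
`ω_d β ∫ v ^ (-γ) Φ (β⁻¹ m s ^ γ v ^ γ) dv` over `(m ^ (-1/γ) / s, 1)`. Since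
`m ^ (-1/γ) / s = m ^ (-1/(γδ)) → 0` and `m s ^ γ = m ^ (1/δ) → ∞`, dominated convergence gives the
limit `ω_d β (∫₀^∞ ρ) / (1 - γ)`, and `∫₀^∞ ρ = δ / (δ - 1)`. Any constant strictly below the limit,
such as half of it, is then an eventual lower bound.
-/

open Set Module
open scoped Topology

section Radial

variable {E : Type*} [NormedAddCommGroup E] [NormedSpace ℝ E] [FiniteDimensional ℝ E]
  [Nontrivial E] [MeasurableSpace E] [BorelSpace E] (μ : Measure E) [μ.IsAddHaarMeasure]

lemma integral_comp_norm_pow_finrank {F : Type*} [NormedAddCommGroup F] [NormedSpace ℝ F]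
    (f : ℝ → F) :
    ∫ x : E, f (‖x‖ ^ finrank ℝ E) ∂μ = μ.real (Metric.ball 0 1) • ∫ t in Ioi 0, f t := by
  have hd : 0 < finrank ℝ E := finrank_pos
  rw [integral_fun_norm_addHaar μ (fun r ↦ f (r ^ finrank ℝ E)),
    ← integral_comp_rpow_Ioi_of_pos (g := f) (Nat.cast_pos.2 hd), smul_comm,
    ← Nat.cast_smul_eq_nsmul ℝ, ← integral_smul]
  simp only [smul_smul, Real.rpow_natCast, ← Nat.cast_pred hd]

lemma setIntegral_comp_norm_pow_finrank {F : Type*} [NormedAddCommGroup F] [NormedSpace ℝ F]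
    (f : ℝ → F) (m : ℝ) :
    ∫ x in {x : E | ‖x‖ ^ finrank ℝ E < m}, f (‖x‖ ^ finrank ℝ E) ∂μ
      = μ.real (Metric.ball 0 1) • ∫ t in Ioo 0 m, f t := by
  have hmeas : MeasurableSet {x : E | ‖x‖ ^ finrank ℝ E < m} :=
    measurableSet_lt (by fun_prop) measurable_const
  rw [← integral_indicator hmeas, ← Ioi_inter_Iio, ← setIntegral_indicator measurableSet_Iio,
    ← integral_comp_norm_pow_finrank μ]
  rfl

lemma setIntegral_comp_mul_norm_pow_finrank (ρ : ℝ → ℝ) {c m : ℝ} (hc : c ≠ 0) (hm : 0 ≤ m) :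
    ∫ x in {x : E | ‖x‖ ^ finrank ℝ E < m}, ρ (c * ‖x‖ ^ finrank ℝ E) ∂μ
      = μ.real (Metric.ball 0 1) * (c⁻¹ * ∫ t in 0..c * m, ρ t) := by
  rw [setIntegral_comp_norm_pow_finrank μ (fun t ↦ ρ (c * t)), ← integral_Ioc_eq_integral_Ioo,
    ← intervalIntegral.integral_of_le hm, intervalIntegral.integral_comp_mul_left _ hc, mul_zero,
    smul_eq_mul, smul_eq_mul]

end Radial

section Primitive

variable {F : Type*} [NormedAddCommGroup F] [NormedSpace ℝ F] {f : ℝ → F} {a : ℝ}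

lemma norm_intervalIntegral_le_integral_Ioi_norm (hf : IntegrableOn f (Ioi a)) {b : ℝ}
    (hab : a ≤ b) : ‖∫ t in a..b, f t‖ ≤ ∫ t in Ioi a, ‖f t‖ :=
  calc ‖∫ t in a..b, f t‖
      ≤ ∫ t in Ioc a b, ‖f t‖ := by
        rw [intervalIntegral.integral_of_le hab]
        exact norm_integral_le_integral_norm f
    _ ≤ ∫ t in Ioi a, ‖f t‖ :=
        setIntegral_mono_set hf.norm (.of_forall fun _ ↦ norm_nonneg _)
          Ioc_subset_Ioi_self.eventuallyLE

lemma continuousOn_primitive_Ioi (hf : IntegrableOn f (Ioi a)) :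
    ContinuousOn (fun b ↦ ∫ t in a..b, f t) (Ioi a) := by
  intro b hb
  have hab : a ≤ b + 1 := by linarith [mem_Ioi.1 hb]
  have hint : IntegrableOn f (uIcc a (b + 1)) := by
    rw [uIcc_of_le hab, integrableOn_Icc_iff_integrableOn_Ioc]
    exact hf.mono_set Ioc_subset_Ioi_self
  refine ContinuousAt.continuousWithinAt
    ((intervalIntegral.continuousOn_primitive_interval hint).continuousAt ?_)
  rw [uIcc_of_le hab]
  exact Icc_mem_nhds hb (lt_add_one b)

end Primitive

section Dilation

variable {ι : Type*} {l : Filter ι} [l.IsCountablyGenerated]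

lemma tendsto_intervalIntegral_of_dominated_of_tendsto_left {F : Type*} [NormedAddCommGroup F]
    [NormedSpace ℝ F] {a b : ℝ} (hab : a < b) {r : ι → ℝ} (har : ∀ᶠ i in l, a ≤ r i)
    (hr : Tendsto r l (𝓝 a)) {f : ι → ℝ → F} {g : ℝ → F} (bound : ℝ → ℝ)
    (hf_meas : ∀ᶠ i in l, AEStronglyMeasurable (f i) (volume.restrict (Ioc a b)))
    (hf_bound : ∀ᶠ i in l, ∀ v ∈ Ioc a b, ‖f i v‖ ≤ bound v)
    (hbound : IntervalIntegrable bound volume a b)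
    (hlim : ∀ v ∈ Ioc a b, Tendsto (fun i ↦ f i v) l (𝓝 (g v))) :
    Tendsto (fun i ↦ ∫ v in r i..b, f i v) l (𝓝 (∫ v in a..b, g v)) := by
  have integral_eq : ∀ᶠ i in l,
      ∫ v in Ioc a b, (Ioi (r i)).indicator (f i) v = ∫ v in r i..b, f i v := by
    filter_upwards [har, hr.eventually_le_const hab] with i hai hib
    rw [setIntegral_indicator measurableSet_Ioi, Ioc_inter_Ioi, max_eq_right hai,
      intervalIntegral.integral_of_le hib]
  rw [intervalIntegral.integral_of_le hab.le]
  refine (tendsto_integral_filter_of_dominated_convergence bound ?measurable ?dominated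
    hbound.1 ?pointwise).congr' integral_eq
  case measurable =>
    filter_upwards [hf_meas] with i hi using hi.indicator measurableSet_Ioi
  case dominated =>
    filter_upwards [hf_bound] with i hi
    filter_upwards [ae_restrict_mem measurableSet_Ioc] with v hv
    exact (norm_indicator_le_norm_self _ v).trans (hi v hv)
  case pointwise =>
    filter_upwards [ae_restrict_mem measurableSet_Ioc] with v hv
    refine (hlim v hv).congr' ?_
    filter_upwards [hr.eventually_lt_const hv.1] with i hi
    rw [indicator_of_mem (mem_Ioi.2 hi)]

variable {Φ : ℝ → ℝ} {p q C L : ℝ}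

lemma tendsto_integral_rpow_mul_comp_mul_rpow (hp : p < 1) (hcont : ContinuousOn Φ (Ioi 0))
    (hbound : ∀ t, 0 < t → ‖Φ t‖ ≤ C) (hlim : Tendsto Φ atTop (𝓝 L)) {r κ : ι → ℝ}
    (hr_nonneg : ∀ᶠ i in l, 0 ≤ r i) (hr : Tendsto r l (𝓝 0)) (hκ : Tendsto κ l atTop) :
    Tendsto (fun i ↦ ∫ v in r i..1, v ^ (-p) * Φ (κ i * v ^ q)) l (𝓝 (L / (1 - p))) := by
  have limit_eq : ∫ v in (0 : ℝ)..1, v ^ (-p) * L = L / (1 - p) := by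
    rw [intervalIntegral.integral_mul_const, integral_rpow (.inl (by linarith)), Real.one_rpow,
      Real.zero_rpow (by linarith), sub_zero, neg_add_eq_sub, one_div_mul_eq_div]
  rw [← limit_eq]
  refine tendsto_intervalIntegral_of_dominated_of_tendsto_left zero_lt_one hr_nonneg hr
    (fun v ↦ v ^ (-p) * C) ?measurable ?dominated
    ((intervalIntegral.intervalIntegrable_rpow' (by linarith)).mul_const C) ?pointwise
  case measurable =>
    filter_upwards [hκ.eventually_gt_atTop 0] with i hi
    have continuousOn_rpow (e : ℝ) : ContinuousOn (fun v : ℝ ↦ v ^ e) (Ioc 0 1) :=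
      continuousOn_id.rpow_const fun v hv ↦ .inl hv.1.ne'
    have continuousOn_comp : ContinuousOn (fun v ↦ Φ (κ i * v ^ q)) (Ioc 0 1) :=
      hcont.comp (continuousOn_const.mul (continuousOn_rpow q))
        fun v hv ↦ mul_pos hi (Real.rpow_pos_of_pos hv.1 q)
    exact ((continuousOn_rpow (-p)).mul continuousOn_comp).aestronglyMeasurable measurableSet_Ioc
  case dominated =>
    filter_upwards [hκ.eventually_gt_atTop 0] with i hi v hv
    rw [norm_mul, Real.norm_of_nonneg (Real.rpow_nonneg hv.1.le _)]
    exact mul_le_mul_of_nonneg_left (hbound _ (mul_pos hi (Real.rpow_pos_of_pos hv.1 q)))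
      (Real.rpow_nonneg hv.1.le _)
  case pointwise =>
    intro v hv
    exact (hlim.comp (hκ.atTop_mul_const (Real.rpow_pos_of_pos hv.1 q))).const_mul _

lemma integral_rpow_mul_comp_eq_rpow_mul (Φ : ℝ → ℝ) (p q k : ℝ) {a s : ℝ} (ha : 0 ≤ a)
    (hs : 0 < s) :
    ∫ u in a..s, u ^ (-p) * Φ (k * u ^ q)
      = s ^ (1 - p) * ∫ v in (a / s)..1, v ^ (-p) * Φ (k * s ^ q * v ^ q) := by
  have hcongr : EqOn (fun v ↦ (s * v) ^ (-p) * Φ (k * (s * v) ^ q))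
      (fun v ↦ s ^ (-p) * (v ^ (-p) * Φ (k * s ^ q * v ^ q))) (uIcc (a / s) 1) := by
    intro v hv
    have hv₀ : 0 ≤ v := (le_min (div_nonneg ha hs.le) zero_le_one).trans hv.1
    simp only [Real.mul_rpow hs.le hv₀, mul_assoc]
  calc ∫ u in a..s, u ^ (-p) * Φ (k * u ^ q)
      = s * ∫ v in (a / s)..1, (s * v) ^ (-p) * Φ (k * (s * v) ^ q) := by
        rw [intervalIntegral.mul_integral_comp_mul_left (f := fun u ↦ u ^ (-p) * Φ (k * u ^ q)),
          mul_div_cancel₀ _ hs.ne', mul_one]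
    _ = s * (s ^ (-p) * ∫ v in (a / s)..1, v ^ (-p) * Φ (k * s ^ q * v ^ q)) := by
        rw [intervalIntegral.integral_congr hcongr, intervalIntegral.integral_const_mul]
    _ = s ^ (1 - p) * ∫ v in (a / s)..1, v ^ (-p) * Φ (k * s ^ q * v ^ q) := by
        rw [← mul_assoc, sub_eq_add_neg, Real.rpow_add hs, Real.rpow_one]

lemma tendsto_integral_rpow_mul_comp_div_rpow (hp : p < 1) (hcont : ContinuousOn Φ (Ioi 0))
    (hbound : ∀ t, 0 < t → ‖Φ t‖ ≤ C) (hlim : Tendsto Φ atTop (𝓝 L)) {a s k : ι → ℝ}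
    (ha : ∀ᶠ i in l, 0 ≤ a i) (hs : ∀ᶠ i in l, 0 < s i)
    (has : Tendsto (fun i ↦ a i / s i) l (𝓝 0)) (hks : Tendsto (fun i ↦ k i * s i ^ q) l atTop) :
    Tendsto (fun i ↦ (∫ u in a i..s i, u ^ (-p) * Φ (k i * u ^ q)) / s i ^ (1 - p)) l
      (𝓝 (L / (1 - p))) := by
  have has_nonneg : ∀ᶠ i in l, 0 ≤ a i / s i := by
    filter_upwards [ha, hs] with i hai hsi using div_nonneg hai hsi.le
  refine (tendsto_integral_rpow_mul_comp_mul_rpow (q := q) hp hcont hbound hlim has_nonneg has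
    hks).congr' ?_
  filter_upwards [ha, hs] with i hai hsi
  rw [integral_rpow_mul_comp_eq_rpow_mul Φ p q (k i) hai hsi,
    mul_div_cancel_left₀ _ (Real.rpow_pos_of_pos hsi _).ne']

end Dilation

section Profile

/-- The profile function `ρ(t) = min(1, t^{-δ})`, the probability that two vertices at rescaled
distance `t > 0` are connected. For `δ ≠ 0` the convention `0 ^ (-δ) = 0` makes the value at `t = 0`
equal to `0` instead of `1`, which no integral sees. -/
noncomputable def powerLawProfile (δ t : ℝ) : ℝ :=
  min 1 (t ^ (-δ))

variable {δ : ℝ}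

lemma powerLawProfile_eqOn_one (hδ : 0 ≤ δ) : EqOn (powerLawProfile δ) (fun _ ↦ 1) (Ioc 0 1) :=
  fun _ ht ↦ min_eq_left <|
    Real.one_le_rpow_of_pos_of_le_one_of_nonpos ht.1 ht.2 (neg_nonpos.2 hδ)

lemma powerLawProfile_eqOn_rpow (hδ : 0 ≤ δ) :
    EqOn (powerLawProfile δ) (fun t ↦ t ^ (-δ)) (Ioi 1) :=
  fun _ ht ↦ min_eq_right <| Real.rpow_le_one_of_one_le_of_nonpos (le_of_lt ht) (neg_nonpos.2 hδ)

lemma integrableOn_powerLawProfile_Ioc_zero_one (hδ : 0 ≤ δ) :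
    IntegrableOn (powerLawProfile δ) (Ioc 0 1) :=
  (integrableOn_const measure_Ioc_lt_top.ne).congr_fun (powerLawProfile_eqOn_one hδ).symm
    measurableSet_Ioc

lemma integrableOn_powerLawProfile_Ioi_one (hδ : 1 < δ) :
    IntegrableOn (powerLawProfile δ) (Ioi 1) :=
  (integrableOn_Ioi_rpow_of_lt (neg_lt_neg hδ) zero_lt_one).congr_fun
    (powerLawProfile_eqOn_rpow (zero_le_one.trans hδ.le)).symm measurableSet_Ioi

lemma integrableOn_powerLawProfile_Ioi_zero (hδ : 1 < δ) :
    IntegrableOn (powerLawProfile δ) (Ioi 0) := by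
  rw [← Ioc_union_Ioi_eq_Ioi (zero_le_one' ℝ)]
  exact (integrableOn_powerLawProfile_Ioc_zero_one (zero_le_one.trans hδ.le)).union
    (integrableOn_powerLawProfile_Ioi_one hδ)

lemma integral_Ioi_powerLawProfile (hδ : 1 < δ) :
    ∫ t in Ioi 0, powerLawProfile δ t = δ / (δ - 1) := by
  have hδ₀ : 0 ≤ δ := zero_le_one.trans hδ.le
  have hδ₁ : δ - 1 ≠ 0 := (sub_pos.2 hδ).ne'
  calc ∫ t in Ioi 0, powerLawProfile δ t
      = (∫ t in Ioc 0 1, powerLawProfile δ t) + ∫ t in Ioi 1, powerLawProfile δ t := by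
        rw [← Ioc_union_Ioi_eq_Ioi (zero_le_one' ℝ)]
        exact setIntegral_union (Ioc_disjoint_Ioi le_rfl) measurableSet_Ioi
          (integrableOn_powerLawProfile_Ioc_zero_one hδ₀) (integrableOn_powerLawProfile_Ioi_one hδ)
    _ = (∫ _ in Ioc (0 : ℝ) 1, (1 : ℝ)) + ∫ t in Ioi (1 : ℝ), t ^ (-δ) := by
        rw [setIntegral_congr_fun measurableSet_Ioc (powerLawProfile_eqOn_one hδ₀),
          setIntegral_congr_fun measurableSet_Ioi (powerLawProfile_eqOn_rpow hδ₀)]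
    _ = 1 + 1 / (δ - 1) := by
        rw [integral_Ioi_rpow_of_lt (neg_lt_neg hδ) zero_lt_one, Real.one_rpow, neg_add_eq_sub,
          neg_div, ← div_neg, neg_sub]
        simp
    _ = δ / (δ - 1) := by
        field_simp
        ring

end Profile

section Asymptotics

variable {E : Type*} [NormedAddCommGroup E] [NormedSpace ℝ E] [FiniteDimensional ℝ E]
  [Nontrivial E] [MeasurableSpace E] [BorelSpace E] (μ : Measure E) [μ.IsAddHaarMeasure]
  {γ β δ : ℝ}

lemma integral_setIntegral_comp_norm_pow_finrank (ρ : ℝ → ℝ) (γ : ℝ) (hβ : β ≠ 0) {a s m : ℝ}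
    (ha : 0 ≤ a) (has : a ≤ s) (hm : 0 ≤ m) :
    ∫ u in a..s, ∫ x in {x : E | ‖x‖ ^ finrank ℝ E < m}, ρ (β⁻¹ * u ^ γ * ‖x‖ ^ finrank ℝ E) ∂μ
      = β * μ.real (Metric.ball 0 1)
        * ∫ u in a..s, u ^ (-γ) * ∫ t in 0..β⁻¹ * m * u ^ γ, ρ t := by
  rw [← intervalIntegral.integral_const_mul, intervalIntegral.integral_of_le has,
    intervalIntegral.integral_of_le has]
  refine setIntegral_congr_fun measurableSet_Ioc fun u hu ↦ ?_
  have hu₀ : 0 < u := ha.trans_lt hu.1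
  have hc : β⁻¹ * u ^ γ ≠ 0 := mul_ne_zero (inv_ne_zero hβ) (Real.rpow_pos_of_pos hu₀ γ).ne'
  simp only [setIntegral_comp_mul_norm_pow_finrank μ ρ hc hm, mul_inv, inv_inv,
    Real.rpow_neg hu₀.le, mul_right_comm β⁻¹ m]
  ring

theorem tendsto_integral_setIntegral_comp_norm_pow_div_rpow {ι : Type*} {l : Filter ι}
    [l.IsCountablyGenerated] {ρ : ℝ → ℝ} (hρ : IntegrableOn ρ (Ioi 0)) (hγ : γ < 1) (hβ : 0 < β)
    {a s m : ι → ℝ} (ha : ∀ᶠ i in l, 0 ≤ a i) (hs : ∀ᶠ i in l, 0 < s i)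
    (has : Tendsto (fun i ↦ a i / s i) l (𝓝 0)) (hms : Tendsto (fun i ↦ m i * s i ^ γ) l atTop) :
    Tendsto (fun i ↦ (∫ u in a i..s i, ∫ x in {x : E | ‖x‖ ^ finrank ℝ E < m i},
        ρ (β⁻¹ * u ^ γ * ‖x‖ ^ finrank ℝ E) ∂μ) / s i ^ (1 - γ)) l
      (𝓝 (β * μ.real (Metric.ball 0 1) * ((∫ t in Ioi 0, ρ t) / (1 - γ)))) := by
  have hβms : Tendsto (fun i ↦ β⁻¹ * m i * s i ^ γ) l atTop := by
    simpa only [mul_assoc] using hms.const_mul_atTop (inv_pos.2 hβ)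
  have hlim := tendsto_integral_rpow_mul_comp_div_rpow hγ (continuousOn_primitive_Ioi hρ)
    (fun _ ht ↦ norm_intervalIntegral_le_integral_Ioi_norm hρ ht.le)
    (intervalIntegral_tendsto_integral_Ioi 0 hρ tendsto_id) ha hs has hβms
  refine (hlim.const_mul (β * μ.real (Metric.ball 0 1))).congr' ?_
  filter_upwards [ha, hs, has.eventually_le_const zero_lt_one, hms.eventually_gt_atTop 0]
    with i hai hsi hasi hmsi
  have hm : 0 ≤ m i := (pos_of_mul_pos_left hmsi (Real.rpow_nonneg hsi.le γ)).le
  rw [integral_setIntegral_comp_norm_pow_finrank μ ρ γ hβ.ne' hai ((div_le_one hsi).1 hasi) hm,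
    mul_div_assoc]

theorem tendsto_integral_setIntegral_powerLawProfile_div_rpow (hδ : 1 < δ) (hγ₀ : 0 < γ)
    (hγ₁ : γ < 1) (hβ : 0 < β) :
    Tendsto (fun m : ℝ ↦ (∫ u in (m ^ (-(1 / γ)))..(m ^ (-((δ - 1) / (γ * δ)))),
        ∫ x in {x : E | ‖x‖ ^ finrank ℝ E < m},
          powerLawProfile δ (β⁻¹ * u ^ γ * ‖x‖ ^ finrank ℝ E) ∂μ)
        / (m ^ (-((δ - 1) / (γ * δ)))) ^ (1 - γ)) atTop
      (𝓝 (β * μ.real (Metric.ball 0 1) * (δ / (δ - 1) / (1 - γ)))) := by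
  have : 0 < δ := zero_lt_one.trans hδ
  have ratio_tendsto :
      Tendsto (fun m : ℝ ↦ m ^ (-(1 / γ)) / m ^ (-((δ - 1) / (γ * δ)))) atTop (𝓝 0) := by
    refine (tendsto_rpow_neg_atTop (y := 1 / (γ * δ)) (by positivity)).congr' ?_
    filter_upwards [eventually_gt_atTop 0] with m hm
    rw [← Real.rpow_sub hm]
    congr 1
    field_simp
    ring
  have scale_tendsto :
      Tendsto (fun m : ℝ ↦ m * (m ^ (-((δ - 1) / (γ * δ)))) ^ γ) atTop atTop := by
    refine (tendsto_rpow_atTop (y := 1 / δ) (by positivity)).congr' ?_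
    filter_upwards [eventually_gt_atTop 0] with m hm
    have exponent_eq : 1 / δ = 1 + -((δ - 1) / (γ * δ)) * γ := by
      field_simp
      ring
    rw [exponent_eq, Real.rpow_add hm, Real.rpow_one, Real.rpow_mul hm.le]
  rw [← integral_Ioi_powerLawProfile hδ]
  refine tendsto_integral_setIntegral_comp_norm_pow_div_rpow μ
    (integrableOn_powerLawProfile_Ioi_zero hδ) hγ₁ hβ ?_ ?_ ratio_tendsto scale_tendsto
  · filter_upwards [eventually_ge_atTop 0] with m hm using Real.rpow_nonneg hm _
  · filter_upwards [eventually_gt_atTop 0] with m hm using Real.rpow_pos_of_pos hm _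

theorem expected_powerful_neighbours_lower_bound_general (hδ : 1 < δ) (hγ₀ : 0 < γ) (hγ₁ : γ < 1)
    (hβ : 0 < β) {C : ℝ}
    (hC : C < β * μ.real (Metric.ball 0 1) * δ / ((1 - γ) * (δ - 1))) :
    ∀ᶠ m : ℝ in atTop,
      C * m ^ (-((1 - γ) * (δ - 1) / (γ * δ)))
        ≤ ∫ u in (m ^ (-(1 / γ)))..(m ^ (-((δ - 1) / (γ * δ)))),
            ∫ x in {x : E | ‖x‖ ^ finrank ℝ E < m},
              powerLawProfile δ (β⁻¹ * u ^ γ * ‖x‖ ^ finrank ℝ E) ∂μ := by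
  have hC' : C < β * μ.real (Metric.ball 0 1) * (δ / (δ - 1) / (1 - γ)) := by
    rwa [div_div, mul_comm (δ - 1), ← mul_div_assoc]
  filter_upwards [(tendsto_integral_setIntegral_powerLawProfile_div_rpow μ hδ hγ₀ hγ₁
    hβ).eventually_const_le hC', eventually_gt_atTop 0] with m hm hm₀
  have exponent_eq : -((1 - γ) * (δ - 1) / (γ * δ)) = -((δ - 1) / (γ * δ)) * (1 - γ) := by ring
  rw [exponent_eq, Real.rpow_mul hm₀.le]
  exact (le_div_iff₀ (by positivity)).1 hm

end Asymptotics

lemma unitBallVol_pos (d : ℕ) : 0 < unitBallVol d :=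
  ENNReal.toReal_pos (Metric.measure_ball_pos volume 0 one_pos).ne' measure_ball_lt_top.ne

/-- with s_m = m^{-(δ-1)/(γδ)} and ρ(t) = min(1,t^{-δ}), for all
sufficiently large m the integral ∫_{m^{-1/γ}}^{s_m} du ∫_{|x|^d<m} ρ(β⁻¹ u^γ |x|^d) dx
is at least (βω_dδ/(2(1-γ)(δ-1))) m^{-(1-γ)(δ-1)/(γδ)}. -/
theorem expected_powerful_neighbours_lower_bound (d : ℕ) (hd : 1 ≤ d) (δ γ β : ℝ)
    (hδ : 1 < δ) (hγ0 : 0 < γ) (hγ1 : γ < 1) (hβ : 0 < β) :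
    ∀ᶠ m : ℝ in atTop,
      β * unitBallVol d * δ / (2 * (1 - γ) * (δ - 1)) * m ^ (-((1 - γ) * (δ - 1) / (γ * δ)))
        ≤ ∫ u in (m ^ (-(1/γ)))..(m ^ (-((δ - 1) / (γ * δ)))),
            ∫ x : EuclideanSpace ℝ (Fin d) in {x | ‖x‖ ^ d < m},
              min 1 ((β⁻¹ * u ^ γ * ‖x‖ ^ d) ^ (-δ)) := by
  have : Nonempty (Fin d) := ⟨⟨0, hd⟩⟩
  have half_lt : β * unitBallVol d * δ / (2 * (1 - γ) * (δ - 1))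
      < β * unitBallVol d * δ / ((1 - γ) * (δ - 1)) := by
    have := unitBallVol_pos d
    have := sub_pos.2 hγ1
    have := sub_pos.2 hδ
    rw [mul_assoc 2]
    exact div_lt_div_of_pos_left (by positivity) (by positivity) (lt_two_mul_self (by positivity))
  simpa only [finrank_euclideanSpace_fin, powerLawProfile] using
    expected_powerful_neighbours_lower_bound_general
      (volume : Measure (EuclideanSpace ℝ (Fin d))) hδ hγ0 hγ1 hβ half_lt
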